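/- For every natural number r, there do not exist SDSOS polynomials σ0, σ1 in two real variables such that the polynomial identity (x1^2 + x2^2)^r * (-2 + x1 + x2)^2 = σ0(x1,x2) + σ1(x1,x2)*(1 - x1^2 - x2^2) holds. -/

import Mathlib

/-!
Put `s = 1/√2` and consider the signed combination of point evaluations
`L h = h(s,s) + h(s,-s) + h(-s,s) - h(-s,-s)`.
On a monomial, `L` returns `±2` times its value at `(s,s)`, with sign `-` exactly when both
exponents are odd. Hence, with `P`, `Q` the values of two terms at `(s,s)`, `L` sends the square
of their sum to `2 (P² + Q² ± 2 P Q) ≥ 0`, so `L` is nonnegative on SDSOS polynomials (although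
not on all sums of squares).
The four points lie on the unit circle, where `1 - x₁² - x₂²` vanishes and `x₁² + x₂² = 1`, so the
identity would give `0 ≤ L σ₀ = L ((-2 + x₁ + x₂)²) = 8 - 8√2 < 0`.
-/

/-- A polynomial is SDSOS if it is a finite sum of squares of polynomials
with at most two monomial terms each. -/
def IsSDSOS (σ : MvPolynomial (Fin 2) ℝ) : Prop :=
  ∃ (n : ℕ) (p q : Fin n → ℝ) (a b : Fin n → (Fin 2 →₀ ℕ)),
    σ = ∑ k, (MvPolynomial.monomial (a k) (p k) + MvPolynomial.monomial (b k) (q k))^2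

/-- Nonnegativity on SDSOS polynomials of the signed combination of the evaluations at
`(±s, ±s)`. -/
lemma IsSDSOS.eval_le {σ : MvPolynomial (Fin 2) ℝ} (h : IsSDSOS σ) (s : ℝ) :
    MvPolynomial.eval ![-s, -s] σ ≤ MvPolynomial.eval ![s, s] σ +
      MvPolynomial.eval ![s, -s] σ + MvPolynomial.eval ![-s, s] σ := by
  obtain ⟨n, p, q, a, b, rfl⟩ := h
  simp only [map_sum, ← Finset.sum_add_distrib]
  refine Finset.sum_le_sum fun k _ => ?_
  have ev (c : Fin 2 →₀ ℕ) (t x y : ℝ) : MvPolynomial.eval ![x, y] (MvPolynomial.monomial c t) =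
      t * (x ^ c 0 * y ^ c 1) := by
    simp [MvPolynomial.eval_monomial, Finsupp.prod_fintype]
  simp only [map_pow, map_add, ev]
  have h₁ := sq_nonneg (p k * (s ^ a k 0 * s ^ a k 1) + q k * (s ^ b k 0 * s ^ b k 1))
  have h₂ := sq_nonneg (p k * (s ^ a k 0 * s ^ a k 1) - q k * (s ^ b k 0 * s ^ b k 1))
  rcases Nat.even_or_odd (a k 0) with h1 | h1 <;> rcases Nat.even_or_odd (a k 1) with h2 | h2 <;>
  rcases Nat.even_or_odd (b k 0) with h3 | h3 <;> rcases Nat.even_or_odd (b k 1) with h4 | h4 <;>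
  simp only [h1.neg_pow, h2.neg_pow, h3.neg_pow, h4.neg_pow] <;> nlinarith only [h₁, h₂]

theorem stmt_18 : ∀ r : ℕ,
    ¬ ∃ σ0 σ1 : MvPolynomial (Fin 2) ℝ, IsSDSOS σ0 ∧ IsSDSOS σ1 ∧
      ((MvPolynomial.X 0)^2 + (MvPolynomial.X 1)^2)^r *
        (MvPolynomial.C (-2) + MvPolynomial.X 0 + MvPolynomial.X 1)^2 =
        σ0 + σ1 * (1 - (MvPolynomial.X 0)^2 - (MvPolynomial.X 1)^2) := by
  rintro r ⟨σ0, σ1, h0, -, h⟩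
  obtain ⟨s, hs0, hs⟩ : ∃ s : ℝ, 0 < s ∧ s ^ 2 = 1 / 2 :=
    ⟨√(1 / 2), by positivity, Real.sq_sqrt (by norm_num)⟩
  have key (x y : ℝ) (hx : x ^ 2 = 1 / 2) (hy : y ^ 2 = 1 / 2) :
      MvPolynomial.eval ![x, y] σ0 = (-2 + x + y) ^ 2 := by
    have e := congrArg (MvPolynomial.eval ![x, y]) h
    simp only [map_mul, map_pow, map_add, map_sub, map_one, MvPolynomial.eval_X,
      MvPolynomial.eval_C, Matrix.cons_val_zero, Matrix.cons_val_one, hx, hy] at e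
    norm_num at e
    exact e.symm
  have hn : (-s) ^ 2 = 1 / 2 := by rw [neg_sq, hs]
  have hL := h0.eval_le s
  rw [key _ _ hs hs, key _ _ hs hn, key _ _ hn hs, key _ _ hn hn] at hL
  -- `hL` says `16 * s ≤ 8`, whereas `s = 1/√2 > 1/2`.
  nlinarith
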